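/- Given a recollement (S, T, U) and a Serre functor F on T, the composite functor j^* ∘ F ∘ j_! : U → U is a right Serre functor on U. -/

import Mathlib

/-!
Setting: `k` a field; `S`, `T`, `U` skeletally small `k`-linear triangulated categories
with finite-dimensional Hom-spaces, `T` with split idempotents.  A recollement
`(S, T, U)` as in [BBD], and (right/left) Serre functors in the sense of
Reiten–Van den Bergh.
-/

open CategoryTheory CategoryTheory.Limits CategoryTheory.Pretriangulated

universe v₁ v₂ v₃ u₁ u₂ u₃ u₄

/-- A right Serre structure on an endofunctor `F` of a `k`-linear category `C`:
isomorphisms `C(X, Y) ≅ C(Y, F X)^∨`, natural in `X` and `Y`.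
A right Serre functor is a functor `F` equipped with such a structure. -/
structure RightSerreStructure (k : Type u₄) [Field k] (C : Type u₁) [Category.{v₁} C]
    [Preadditive C] [CategoryTheory.Linear k C] (F : C ⥤ C) where
  equiv : ∀ X Y : C, (X ⟶ Y) ≃ₗ[k] Module.Dual k (Y ⟶ F.obj X)
  naturality_left : ∀ {X X' Y : C} (f : X' ⟶ X) (φ : X ⟶ Y) (u : Y ⟶ F.obj X'),
    equiv X' Y (f ≫ φ) u = equiv X Y φ (u ≫ F.map f)
  naturality_right : ∀ {X Y Y' : C} (φ : X ⟶ Y) (g : Y ⟶ Y') (u : Y' ⟶ F.obj X),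
    equiv X Y' (φ ≫ g) u = equiv X Y φ (g ≫ u)

/-- A left Serre structure on an endofunctor `F'` of a `k`-linear category `C`:
isomorphisms `C(X, Y) ≅ C(F' Y, X)^∨`, natural in `X` and `Y`.
A left Serre functor is a functor `F'` equipped with such a structure. -/
structure LeftSerreStructure (k : Type u₄) [Field k] (C : Type u₁) [Category.{v₁} C]
    [Preadditive C] [CategoryTheory.Linear k C] (F' : C ⥤ C) where
  equiv : ∀ X Y : C, (X ⟶ Y) ≃ₗ[k] Module.Dual k (F'.obj Y ⟶ X)
  naturality_left : ∀ {X X' Y : C} (f : X' ⟶ X) (φ : X ⟶ Y) (u : F'.obj Y ⟶ X'),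
    equiv X' Y (f ≫ φ) u = equiv X Y φ (u ≫ f)
  naturality_right : ∀ {X Y Y' : C} (φ : X ⟶ Y) (g : Y ⟶ Y') (u : F'.obj Y' ⟶ X),
    equiv X Y' (φ ≫ g) u = equiv X Y φ (F'.map g ≫ u)

/-- A Serre functor: an essentially surjective right Serre functor. -/
structure SerreFunctor (k : Type u₄) [Field k] (C : Type u₁) [Category.{v₁} C]
    [Preadditive C] [CategoryTheory.Linear k C] where
  F : C ⥤ C
  rightSerre : RightSerreStructure k C F
  essSurj : F.EssSurj

/-- A recollement of triangulated categories `(S, T, U)`: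
triangulated functors `i_* = iSt : S ⥤ T`, `i^* = iUp, i^! = iSh : T ⥤ S`,
`j^* = jUp : T ⥤ U`, `j_! = jLo, j_* = jSt : U ⥤ T` with the adjunctions,
vanishing, full faithfulness and distinguished-triangle conditions of [BBD, sec. 1.4]. -/
structure Recollement (S : Type u₁) (T : Type u₂) (U : Type u₃)
    [Category.{v₁} S] [Category.{v₂} T] [Category.{v₃} U]
    [HasZeroObject S] [HasZeroObject T] [HasZeroObject U]
    [Preadditive S] [Preadditive T] [Preadditive U]
    [HasShift S ℤ] [HasShift T ℤ] [HasShift U ℤ]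
    [∀ n : ℤ, (shiftFunctor S n).Additive] [∀ n : ℤ, (shiftFunctor T n).Additive]
    [∀ n : ℤ, (shiftFunctor U n).Additive]
    [Pretriangulated S] [Pretriangulated T] [Pretriangulated U] where
  /-- `i_* : S ⥤ T` -/
  iSt : S ⥤ T
  /-- `i^* : T ⥤ S` -/
  iUp : T ⥤ S
  /-- `i^! : T ⥤ S` -/
  iSh : T ⥤ S
  /-- `j^* : T ⥤ U` -/
  jUp : T ⥤ U
  /-- `j_! : U ⥤ T` -/
  jLo : U ⥤ T
  /-- `j_* : U ⥤ T` -/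
  jSt : U ⥤ T
  [commShift_iSt : iSt.CommShift ℤ]
  [commShift_iUp : iUp.CommShift ℤ]
  [commShift_iSh : iSh.CommShift ℤ]
  [commShift_jUp : jUp.CommShift ℤ]
  [commShift_jLo : jLo.CommShift ℤ]
  [commShift_jSt : jSt.CommShift ℤ]
  [isTriangulated_iSt : iSt.IsTriangulated]
  [isTriangulated_iUp : iUp.IsTriangulated]
  [isTriangulated_iSh : iSh.IsTriangulated]
  [isTriangulated_jUp : jUp.IsTriangulated]
  [isTriangulated_jLo : jLo.IsTriangulated]
  [isTriangulated_jSt : jSt.IsTriangulated]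
  /-- `(i^*, i_*)` is an adjoint pair. -/
  adj₁ : iUp ⊣ iSt
  /-- `(i_*, i^!)` is an adjoint pair. -/
  adj₂ : iSt ⊣ iSh
  /-- `(j_!, j^*)` is an adjoint pair. -/
  adj₃ : jLo ⊣ jUp
  /-- `(j^*, j_*)` is an adjoint pair. -/
  adj₄ : jUp ⊣ jSt
  /-- `j^* ∘ i_* = 0`. -/
  zero_comp : ∀ X : S, IsZero (jUp.obj (iSt.obj X))
  fullyFaithful_iSt : iSt.FullyFaithful
  fullyFaithful_jLo : jLo.FullyFaithful
  fullyFaithful_jSt : jSt.FullyFaithful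
  /-- The distinguished triangle `i_* i^! X ⟶ X ⟶ j_* j^* X ⟶`, whose morphisms into and
  out of `X` are the counit of `(i_*, i^!)` and the unit of `(j^*, j_*)`. -/
  triangle_a : ∀ X : T, ∃ δ : jSt.obj (jUp.obj X) ⟶ (iSt.obj (iSh.obj X))⟦(1 : ℤ)⟧,
    Triangle.mk (adj₂.counit.app X) (adj₄.unit.app X) δ ∈ distTriang T
  /-- The distinguished triangle `j_! j^* X ⟶ X ⟶ i_* i^* X ⟶`, whose morphisms into and
  out of `X` are the counit of `(j_!, j^*)` and the unit of `(i^*, i_*)`. -/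
  triangle_b : ∀ X : T, ∃ δ : iSt.obj (iUp.obj X) ⟶ (jLo.obj (jUp.obj X))⟦(1 : ℤ)⟧,
    Triangle.mk (adj₃.counit.app X) (adj₁.unit.app X) δ ∈ distTriang T

/-!
For a fully faithful `L = j_!` with right adjoint `J = j^*`, the natural isomorphisms
`U(X, Y) ≅ T(L X, L Y) ≅ T(L Y, F L X)^∨ ≅ U(Y, J F L X)^∨`
are linear for the `k`-action on `U` transported from `T` along `L`.  Since the functors of a
recollement are not assumed to be linear, the given linear structure on `U` may be a different one,
with other dual spaces.

Both fields, say `A` for the transported and `B` for the given structure, act through the center `R`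
of the category `U`, and the pairings `p : U(X, Y) × U(Y, Z) → A` are `R`-balanced.  So it suffices
to find one `B`-linear form `θ` on `Hom_A(R, A)` for which `(w, v) ↦ θ (r ↦ p w (r • v))` is perfect
whenever `p` is.  This holds as soon as `θ` does not vanish on any nonzero `R`-submodule of
`Hom_A(R, A)` of finite dimension over `A`.  Such a submodule is the annihilator of a proper ideal
of `R`, so it contains `Hom_A(R ⧸ m, A)` for some maximal ideal `m`; and choosing one nonzero
element in each of these spaces gives a `B`-linearly independent family, on which `θ` may be
prescribed.
-/

section Coinduced

variable {A R V W : Type*} [CommRing A] [CommRing R] [Algebra A R]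

/-- The coinduced `R`-module structure on `Hom_A(R, A)`, with `(r • f) x = f (r * x)`. -/
abbrev coinducedModule (A R : Type*) [CommRing A] [CommRing R] [Algebra A R] :
    Module R (Module.Dual A R) where
  smul r f := f ∘ₗ LinearMap.mulLeft A r
  one_smul f := LinearMap.ext fun x ↦ congrArg f (one_mul x)
  mul_smul r s f := LinearMap.ext fun x ↦ congrArg f (by simp [mul_left_comm])
  smul_zero _ := rfl
  smul_add _ _ _ := rfl
  add_smul r s f := LinearMap.ext fun x ↦ by simp [HSMul.hSMul, add_mul]
  zero_smul f := LinearMap.ext fun x ↦ by simp [HSMul.hSMul]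

attribute [local instance] coinducedModule

theorem coinducedModule_smul_apply (r : R) (f : Module.Dual A R) (x : R) :
    (r • f) x = f (r * x) :=
  rfl

theorem coinducedModule_isScalarTower (A R : Type*) [CommRing A] [CommRing R] [Algebra A R] :
    IsScalarTower A R (Module.Dual A R) where
  smul_assoc a r f := LinearMap.ext fun x ↦ by
    simp [coinducedModule_smul_apply]

attribute [local instance] coinducedModule_isScalarTower

variable [AddCommGroup V] [Module A V] [Module R V] [IsScalarTower A R V]

variable (R) in
/-- The `R`-linear map `V → Hom_A(R, A)`, `v ↦ (r ↦ l (r • v))`, adjoint to `l : V → A`. -/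
def coinducedLift (l : Module.Dual A V) : V →ₗ[R] Module.Dual A R where
  toFun v := l ∘ₗ (LinearMap.toSpanSingleton R V v).restrictScalars A
  map_add' v w := by ext; simp
  map_smul' r v := LinearMap.ext fun x ↦ congrArg l (by simp [smul_smul, mul_comm])

theorem coinducedLift_apply (l : Module.Dual A V) (v : V) (r : R) :
    coinducedLift R l v r = l (r • v) :=
  rfl

variable [AddCommGroup W] [Module A W] [Module R W]

theorem coinducedLift_flip [IsScalarTower A R W] (p : W →ₗ[A] V →ₗ[A] A)
    (hp : ∀ (r : R) w v, p (r • w) v = p w (r • v)) (w : W) (v : V) :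
    coinducedLift R (p.flip v) w = coinducedLift R (p w) v :=
  LinearMap.ext fun r ↦ hp r w v

/-- An `R`-balanced `A`-bilinear form `W × V → A` as an `R`-bilinear form with values in
`Hom_A(R, A)`. -/
def coinducedPairing (p : W →ₗ[A] V →ₗ[A] A) (hp : ∀ (r : R) w v, p (r • w) v = p w (r • v)) :
    W →ₗ[R] V →ₗ[R] Module.Dual A R where
  toFun w := coinducedLift R (p w)
  map_add' w w' := by ext; simp [coinducedLift_apply]
  map_smul' r w := by
    ext v x
    simp [coinducedLift_apply, coinducedModule_smul_apply, hp, smul_smul]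

end Coinduced

section Separating

open Submodule

attribute [local instance] coinducedModule coinducedModule_isScalarTower

variable {A B R E V W : Type*} [Field A] [Field B] [CommRing R] [Algebra A R]

theorem exists_isMaximal_dualAnnihilator_le {N : Submodule R (Module.Dual A R)}
    [FiniteDimensional A N] (hN : N ≠ ⊥) :
    ∃ m : Ideal R, m.IsMaximal ∧
      (m.restrictScalars A).dualAnnihilator ≤ N.restrictScalars A := by
  have : FiniteDimensional A (N.restrictScalars A) := ‹FiniteDimensional A N›
  let I : Ideal R :=
    { (N.restrictScalars A).dualCoannihilator with
      smul_mem' := fun r x hx ↦ (mem_dualCoannihilator _).2 fun f hf ↦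
        (mem_dualCoannihilator _).1 hx (r • f) (N.smul_mem r hf) }
  have hI : I.restrictScalars A = (N.restrictScalars A).dualCoannihilator := rfl
  have hI' : I ≠ ⊤ := by
    intro hIt
    refine hN ((restrictScalars_eq_bot_iff A R _).1 ?_)
    rw [← Subspace.dualCoannihilator_dualAnnihilator_eq (W := N.restrictScalars A), ← hI, hIt,
      restrictScalars_top, dualAnnihilator_top]
  obtain ⟨m, hm, hIm⟩ := I.exists_le_maximal hI'
  refine ⟨m, hm, ?_⟩
  rw [← Subspace.dualCoannihilator_dualAnnihilator_eq (W := N.restrictScalars A), ← hI]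
  exact dualAnnihilator_anti hIm

theorem linearIndependent_of_mem_torsionBySet_maximalSpectrum [AddCommGroup E] [Module R E]
    [Algebra B R] [Module B E] [IsScalarTower B R E] {x : MaximalSpectrum R → E}
    (hx : ∀ m, x m ∈ torsionBySet R E m.asIdeal) (hx0 : ∀ m, x m ≠ 0) :
    LinearIndependent B x := by
  have hindep : iSupIndep fun m : MaximalSpectrum R ↦ torsionBySet R E m.asIdeal := by
    refine iSupIndep_iff_supIndep.2 fun s ↦ supIndep_torsionBySet_ideal fun m _ n _ hmn ↦ ?_
    exact m.isMaximal.coprime_of_ne n.isMaximal fun h ↦ hmn (MaximalSpectrum.ext h)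
  rw [iSupIndep_iff_finsetSum_eq_zero_imp_eq_zero] at hindep
  refine linearIndependent_iff'.2 fun s b hsum m hm ↦ ?_
  have hterm : b m • x m = 0 :=
    hindep s (fun n ↦ b n • x n) (fun n _ ↦ smul_of_tower_mem _ _ (hx n)) hsum m hm
  exact (smul_eq_zero.1 hterm).resolve_right (hx0 m)

variable [Module B (Module.Dual A R)]

/-- For every maximal ideal `m`, the form `θ` is not identically zero on `Hom_A(R ⧸ m, A)`, encoded
as the annihilator of `m` in `Hom_A(R, A)`. -/
def IsSeparating (θ : Module.Dual A R →ₗ[B] B) : Prop :=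
  ∀ m : Ideal R, m.IsMaximal → ∃ f ∈ (m.restrictScalars A).dualAnnihilator, θ f ≠ 0

theorem exists_isSeparating [Algebra B R] [IsScalarTower B R (Module.Dual A R)] :
    ∃ θ : Module.Dual A R →ₗ[B] B, IsSeparating θ := by
  have hx (m : MaximalSpectrum R) :
      ∃ f ∈ (m.asIdeal.restrictScalars A).dualAnnihilator, f ≠ 0 :=
    exists_mem_ne_zero_of_ne_bot fun h ↦ m.isMaximal.ne_top <|
      (restrictScalars_eq_top_iff A R _).1 <|
        Subspace.dualAnnihilator_inj.1 (h.trans dualAnnihilator_top.symm)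
  choose x hx hx0 using hx
  have htorsion (m : MaximalSpectrum R) :
      x m ∈ torsionBySet R (Module.Dual A R) m.asIdeal := by
    refine (mem_torsionBySet_iff _ _).2 fun r ↦ LinearMap.ext fun s ↦ ?_
    exact (mem_dualAnnihilator _).1 (hx m) _ (m.asIdeal.mul_mem_right s r.2)
  have hli := linearIndependent_of_mem_torsionBySet_maximalSpectrum (B := B) htorsion hx0
  obtain ⟨θ, hθ⟩ := Module.exists_dual_forall_apply_eq_one (hli.linearIndepOn Set.univ)
  exact ⟨θ, fun m hm ↦
    ⟨x ⟨m, hm⟩, hx ⟨m, hm⟩, (hθ ⟨m, hm⟩ trivial).trans_ne one_ne_zero⟩⟩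

variable [AddCommGroup V] [Module A V] [Module R V] [IsScalarTower A R V]

theorem IsSeparating.exists_coinducedLift_ne_zero [FiniteDimensional A V]
    {θ : Module.Dual A R →ₗ[B] B} (hθ : IsSeparating θ) {l : Module.Dual A V} (hl : l ≠ 0) :
    ∃ v, θ (coinducedLift R l v) ≠ 0 := by
  have hrange : LinearMap.range (coinducedLift R l) ≠ ⊥ := by
    contrapose! hl
    ext v
    simpa [coinducedLift_apply] using
      LinearMap.congr_fun (LinearMap.congr_fun (LinearMap.range_eq_bot.1 hl) v) (1 : R)
  have : FiniteDimensional A (LinearMap.range (coinducedLift R l)) :=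
    inferInstanceAs (FiniteDimensional A
      (LinearMap.range ((coinducedLift R l).restrictScalars A)))
  obtain ⟨m, hm, hle⟩ := exists_isMaximal_dualAnnihilator_le hrange
  obtain ⟨f, hf, hne⟩ := hθ m hm
  obtain ⟨v, rfl⟩ := hle hf
  exact ⟨v, hne⟩

variable [AddCommGroup W] [Module A W] [Module R W] [Algebra B R]
  [IsScalarTower B R (Module.Dual A R)] [Module B V] [IsScalarTower B R V] [Module B W]
  [IsScalarTower B R W]

/-- The `B`-valued pairing `(w, v) ↦ θ (r ↦ p w (r • v))` obtained from an `A`-valued one. -/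
def transferPairing (θ : Module.Dual A R →ₗ[B] B) (p : W →ₗ[A] V →ₗ[A] A)
    (hp : ∀ (r : R) w v, p (r • w) v = p w (r • v)) : W →ₗ[B] V →ₗ[B] B :=
  ((coinducedPairing p hp).restrictScalars₁₂ B B).compr₂ θ

theorem IsSeparating.isPerfPair_transferPairing [IsScalarTower A R W] [FiniteDimensional A V]
    [FiniteDimensional A W] [FiniteDimensional B W] {θ : Module.Dual A R →ₗ[B] B}
    (hθ : IsSeparating θ) (p : W →ₗ[A] V →ₗ[A] A) [p.IsPerfPair]
    (hp : ∀ (r : R) w v, p (r • w) v = p w (r • v)) : (transferPairing θ p hp).IsPerfPair := by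
  refine .of_injective ((injective_iff_map_eq_zero _).2 fun w hw ↦ ?_)
    ((injective_iff_map_eq_zero _).2 fun v hv ↦ ?_)
  · by_contra hw0
    obtain ⟨v, hv⟩ := hθ.exists_coinducedLift_ne_zero
      ((map_ne_zero_iff p (LinearMap.IsPerfPair.bijective_left p).injective).2 hw0)
    exact hv (LinearMap.congr_fun hw v)
  · by_contra hv0
    obtain ⟨w, hw⟩ := hθ.exists_coinducedLift_ne_zero
      ((map_ne_zero_iff p.flip (LinearMap.IsPerfPair.bijective_right p).injective).2 hv0)
    rw [coinducedLift_flip p hp] at hw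
    exact hw (LinearMap.congr_fun hv w)

end Separating

namespace RightSerreStructure

variable {k : Type*} [Field k] {C : Type u₁} [Category.{v₁} C] [Preadditive C]
  [CategoryTheory.Linear k C] {F : C ⥤ C} (s : RightSerreStructure k C F)

include s

/-- By the Erdős–Kaplansky theorem, an infinite-dimensional `X ⟶ Y` would make
`dim (X ⟶ Y) > dim (Y ⟶ F X) > dim (F X ⟶ F Y) > ⋯` an infinite descent of cardinals. -/
theorem finiteDimensional_hom (X Y : C) : FiniteDimensional k (X ⟶ Y) := by
  induction h : Module.rank k (X ⟶ Y) using WellFoundedLT.induction generalizing X Y with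
  | _ c ih =>
    have hfin : FiniteDimensional k (Y ⟶ F.obj X) := by
      by_contra hinf
      refine hinf (ih _ ?_ Y (F.obj X) rfl)
      have hlt := lift_rank_lt_rank_dual (not_lt.1 (Module.rank_lt_aleph0_iff.not.2 hinf))
      rw [← Cardinal.lift_lt, Cardinal.lift_lift, ← (s.equiv X Y).lift_rank_eq, h] at hlt
      exact Cardinal.lift_lt.1 hlt
    exact Module.Finite.equiv (s.equiv X Y).symm

/-- The pairing `(X ⟶ Y) × (Y ⟶ F X) → k` given by `s`. -/
def pairing (X Y : C) : (X ⟶ Y) →ₗ[k] (Y ⟶ F.obj X) →ₗ[k] k := s.equiv X Y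

theorem isPerfPair_pairing (X Y : C) : (s.pairing X Y).IsPerfPair := by
  have := s.finiteDimensional_hom Y (F.obj X)
  exact .of_bijective _ (s.equiv X Y).bijective

theorem pairing_smul {R : Type*} [CommRing R] [CategoryTheory.Linear R C] {X Y : C} (r : R)
    (φ : X ⟶ Y) (u : Y ⟶ F.obj X) :
    s.pairing X Y (r • φ) u = s.pairing X Y φ (r • u) := by
  simpa [pairing] using s.naturality_right φ (r • 𝟙 Y) u

attribute [local instance] coinducedModule coinducedModule_isScalarTower

theorem nonempty_changeOfField_of_isScalarTower (l R : Type*) [Field l] [CommRing R]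
    [Algebra k R] [Algebra l R] [CategoryTheory.Linear l C] [CategoryTheory.Linear R C]
    [∀ X Y : C, IsScalarTower k R (X ⟶ Y)] [∀ X Y : C, IsScalarTower l R (X ⟶ Y)]
    [∀ X Y : C, FiniteDimensional l (X ⟶ Y)] : Nonempty (RightSerreStructure l C F) := by
  let _ : Module l (Module.Dual k R) := Module.compHom _ (algebraMap l R)
  have : IsScalarTower l R (Module.Dual k R) := .of_algebraMap_smul fun _ _ ↦ rfl
  obtain ⟨θ, hθ⟩ := exists_isSeparating (A := k) (B := l) (R := R)
  have := s.finiteDimensional_hom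
  have := s.isPerfPair_pairing
  have hperf (X Y : C) := hθ.isPerfPair_transferPairing (s.pairing X Y) s.pairing_smul
  refine ⟨fun X Y ↦ (transferPairing θ (s.pairing X Y) s.pairing_smul).toPerfPair, ?_, ?_⟩
  · intro X X' Y f φ u
    refine congrArg θ (LinearMap.ext fun r ↦ ?_)
    calc
      s.equiv X' Y (f ≫ φ) (r • u) = s.equiv X Y φ ((r • u) ≫ F.map f) :=
        s.naturality_left f φ (r • u)
      _ = s.equiv X Y φ (r • (u ≫ F.map f)) := by rw [Linear.smul_comp]
  · intro X Y Y' φ g u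
    refine congrArg θ (LinearMap.ext fun r ↦ ?_)
    calc
      s.equiv X Y' (φ ≫ g) (r • u) = s.equiv X Y φ (g ≫ (r • u)) :=
        s.naturality_right φ g (r • u)
      _ = s.equiv X Y φ (r • (g ≫ u)) := by rw [Linear.comp_smul]

end RightSerreStructure

section CatCenter

open scoped IsMulCommutative

/-- A preadditive category is linear over its center, through the scalar multiplication
`CatCenter.smul_eq`. -/
abbrev catCenterLinear (C : Type*) [Category* C] [Preadditive C] :
    CategoryTheory.Linear (CatCenter C) C where
  homModule X Y :=
    { one_smul := fun f ↦ Category.comp_id f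
      mul_smul := fun z w f ↦ by simp [CatCenter.smul_eq]
      smul_zero := fun z ↦ zero_comp
      smul_add := fun z f g ↦ Preadditive.add_comp _ _ _ f g _
      add_smul := fun z w f ↦ Preadditive.comp_add _ _ _ f _ _
      zero_smul := fun f ↦ comp_zero }
  smul_comp X Y Z z f g := by simp [CatCenter.smul_eq, CatCenter.naturality]
  comp_smul X Y Z f z g := by simp [CatCenter.smul_eq]

/-- The center of a `k`-linear category as a `k`-algebra. -/
abbrev catCenterAlgebra (k C : Type*) [CommRing k] [Category* C] [Preadditive C]
    [CategoryTheory.Linear k C] : Algebra k (CatCenter C) :=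
  (Linear.toCatCenter k C).toAlgebra

attribute [local instance] catCenterLinear catCenterAlgebra

theorem isScalarTower_catCenter_hom {k C : Type*} [CommRing k] [Category* C] [Preadditive C]
    [CategoryTheory.Linear k C] (X Y : C) : IsScalarTower k (CatCenter C) (X ⟶ Y) :=
  .of_algebraMap_smul fun a f ↦ by
    change f ≫ (a • 𝟙 Y) = a • f
    simp

attribute [local instance] isScalarTower_catCenter_hom

theorem RightSerreStructure.nonempty_changeOfField {k C : Type*} [Field k] [Category* C]
    [Preadditive C] [CategoryTheory.Linear k C] {F : C ⥤ C} (s : RightSerreStructure k C F)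
    (l : Type*) [Field l] [CategoryTheory.Linear l C]
    [∀ X Y : C, FiniteDimensional l (X ⟶ Y)] : Nonempty (RightSerreStructure l C F) :=
  s.nonempty_changeOfField_of_isScalarTower l (CatCenter C)

end CatCenter

section Adjunction

variable {k : Type*} {T : Type u₂} {U : Type u₃} [Category.{v₂} T] [Category.{v₃} U]
  [Preadditive T] [Preadditive U] {L : U ⥤ T} [L.Additive]

/-- The linear structure transported to the source of a fully faithful additive functor. -/
abbrev linearOfFullyFaithful (k : Type*) [Semiring k] [CategoryTheory.Linear k T]
    (hL : L.FullyFaithful) : CategoryTheory.Linear k U where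
  homModule X Y :=
    (show (X ⟶ Y) ≃+ (L.obj X ⟶ L.obj Y) from
      { hL.homEquiv with map_add' := fun _ _ ↦ L.map_add }).module k
  smul_comp X Y Z r f g := hL.map_injective <| by
    change L.map (hL.preimage (r • L.map f) ≫ g) = L.map (hL.preimage (r • L.map (f ≫ g)))
    simp
  comp_smul X Y Z f r g := hL.map_injective <| by
    change L.map (f ≫ hL.preimage (r • L.map g)) = L.map (hL.preimage (r • L.map (f ≫ g)))
    simp

theorem functor_linear_linearOfFullyFaithful [Semiring k] [CategoryTheory.Linear k T]
    (hL : L.FullyFaithful) :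
    letI := linearOfFullyFaithful k hL
    L.Linear k :=
  letI := linearOfFullyFaithful k hL
  { map_smul f r := hL.map_preimage (r • L.map f) }

variable [Field k] [CategoryTheory.Linear k T]

/-- The right Serre structure on the restriction of `F` along a linear, fully faithful left
adjoint, given by `U(X, Y) ≅ T(L X, L Y) ≅ T(L Y, F L X)^∨ ≅ U(Y, J F L X)^∨`. -/
noncomputable def RightSerreStructure.ofAdjunction [CategoryTheory.Linear k U] [L.Linear k]
    {F : T ⥤ T} (s : RightSerreStructure k T F) (hL : L.FullyFaithful) {J : T ⥤ U}
    (adj : L ⊣ J) : RightSerreStructure k U (L ⋙ F ⋙ J) where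
  equiv X Y :=
    (LinearEquiv.ofBijective (L.mapLinearMap k) hL.homEquiv.bijective).trans
      ((s.equiv (L.obj X) (L.obj Y)).trans
        (LinearEquiv.dualMap
          { (adj.homAddEquiv Y (F.obj (L.obj X))).symm with
            map_smul' := fun r u ↦ by
              change (adj.homEquiv _ _).symm (r • u) = r • (adj.homEquiv _ _).symm u
              simp [Adjunction.homEquiv_counit] }))
  naturality_left f φ u := by
    change s.equiv _ _ (L.map (f ≫ φ)) ((adj.homEquiv _ _).symm u) =
      s.equiv _ _ (L.map φ) ((adj.homEquiv _ _).symm (u ≫ J.map (F.map (L.map f))))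
    rw [L.map_comp, s.naturality_left, adj.homEquiv_naturality_right_symm]
  naturality_right φ g u := by
    change s.equiv _ _ (L.map (φ ≫ g)) ((adj.homEquiv _ _).symm u) =
      s.equiv _ _ (L.map φ) ((adj.homEquiv _ _).symm (g ≫ u))
    rw [L.map_comp, s.naturality_right, adj.homEquiv_naturality_left_symm]

theorem recollement_right_serre_structure_on_U_general {l : Type*} [Field l]
    [CategoryTheory.Linear l U] [∀ X Y : U, FiniteDimensional l (X ⟶ Y)] {J : T ⥤ U}
    (hL : L.FullyFaithful) (adj : L ⊣ J) {F : T ⥤ T} (s : RightSerreStructure k T F) :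
    Nonempty (RightSerreStructure l U (L ⋙ F ⋙ J)) := by
  let _ : CategoryTheory.Linear k U := linearOfFullyFaithful k hL
  have : L.Linear k := functor_linear_linearOfFullyFaithful hL
  exact (s.ofAdjunction hL adj).nonempty_changeOfField l

end Adjunction

/-- Given a recollement `(S, T, U)` and a Serre functor `F` on `T`, the composite
functor `j^* ∘ F ∘ j_! : U ⥤ U` is a right Serre functor on `U`. -/
theorem recollement_right_serre_structure_on_U
    {k : Type u₄} [Field k]
    {S : Type u₁} {T : Type u₂} {U : Type u₃}
    [Category.{v₁} S] [Category.{v₂} T] [Category.{v₃} U]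
    [HasZeroObject S] [HasZeroObject T] [HasZeroObject U]
    [Preadditive S] [Preadditive T] [Preadditive U]
    [CategoryTheory.Linear k S] [CategoryTheory.Linear k T] [CategoryTheory.Linear k U]
    [HasShift S ℤ] [HasShift T ℤ] [HasShift U ℤ]
    [∀ n : ℤ, (shiftFunctor S n).Additive] [∀ n : ℤ, (shiftFunctor T n).Additive]
    [∀ n : ℤ, (shiftFunctor U n).Additive]
    [Pretriangulated S] [Pretriangulated T] [Pretriangulated U]
    [EssentiallySmall.{v₁} S] [EssentiallySmall.{v₂} T] [EssentiallySmall.{v₃} U]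
    [∀ X Y : S, FiniteDimensional k (X ⟶ Y)]
    [∀ X Y : T, FiniteDimensional k (X ⟶ Y)]
    [∀ X Y : U, FiniteDimensional k (X ⟶ Y)]
    [IsIdempotentComplete T]
    (R : Recollement S T U)
    (SF : SerreFunctor k T) :
    Nonempty (RightSerreStructure k U (R.jLo ⋙ SF.F ⋙ R.jUp)) := by
  let _ := R.commShift_jLo
  have := R.isTriangulated_jLo
  exact recollement_right_serre_structure_on_U_general R.fullyFaithful_jLo R.adj₃
    SF.rightSerre
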